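/- arXiv:1704.04191 — 2 statements merged into one kernel-verified Lean document; each statement's English description precedes it below -/
import Mathlib

section
/- Let f : ℝⁿ → ℝⁿ be continuously differentiable, F : ℝᵐ ⇉ ℝᵐ a set-valued map with closed graph, B an injective n×m real matrix and C a surjective m×n real matrix. Define Φ(z) = f(z) + B F(Cz) and the solution mapping S(p) = { z : p ∈ Φ(z) }. Let (z̄, p̄) ∈ gph Φ and set v̄ = (BᵀB)⁻¹Bᵀ(p̄ − f(z̄)). Then S has the Aubin property at p̄ for z̄ if and only if the implication [((CCᵀ)⁻¹C ∇f(z̄)ᵀ ξ, Bᵀ ξ) ∈ −N((Cz̄, v̄); gph F) and ∇f(z̄)ᵀ ξ ∈ rge Cᵀ ⟹ ξ = 0] holds. -/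
open Filter Topology Set Metric RealInnerProductSpace
open scoped ENNReal NNReal Pointwise

noncomputable section

/-- Graph of a set-valued map. -/
def svGraph {α β : Type*} (F : α → Set β) : Set (α × β) := {p | p.2 ∈ F p.1}

/-- Inverse of a set-valued map. -/
def svInv {α β : Type*} (F : α → Set β) : β → Set α := fun y => {x | y ∈ F x}

/-- Local closedness of a set at a point of a metric space. -/
def LocClosedAt {α : Type*} [PseudoMetricSpace α] (s : Set α) (p : α) : Prop :=
  ∃ r : ℝ, 0 < r ∧ IsClosed (s ∩ Metric.closedBall p r)

section Cones

variable {X : Type*} [NormedAddCommGroup X] [NormedSpace ℝ X]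

/-- Bouligand-Severi contingent cone. -/
def contingentCone (Ω : Set X) (x : X) : Set X :=
  { u | ∃ (t : ℕ → ℝ) (uk : ℕ → X), (∀ k, 0 < t k) ∧
      Tendsto t atTop (𝓝 0) ∧ Tendsto uk atTop (𝓝 u) ∧ ∀ k, x + t k • uk k ∈ Ω }

/-- Bouligand paratingent cone. -/
def paratingentCone (Ω : Set X) (x : X) : Set X :=
  { u | ∃ (t : ℕ → ℝ) (uk : ℕ → X) (xk : ℕ → X), (∀ k, 0 < t k) ∧
      Tendsto t atTop (𝓝 0) ∧ Tendsto uk atTop (𝓝 u) ∧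
      (∀ k, xk k ∈ Ω) ∧ Tendsto xk atTop (𝓝 x) ∧ ∀ k, xk k + t k • uk k ∈ Ω }

end Cones

section NormalCones

variable {X : Type*} [NormedAddCommGroup X] [InnerProductSpace ℝ X]

/-- Fréchet (regular) normal cone. -/
def frechetNormalCone (Ω : Set X) (x : X) : Set X :=
  { v | ∀ ε : ℝ, 0 < ε → ∃ δ : ℝ, 0 < δ ∧ ∀ y ∈ Ω, ‖y - x‖ < δ →
      ⟪v, y - x⟫ ≤ ε * ‖y - x‖ }

/-- Limiting (Mordukhovich) normal cone. -/
def limitingNormalCone (Ω : Set X) (x : X) : Set X :=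
  { v | ∃ (xk : ℕ → X) (vk : ℕ → X), (∀ k, xk k ∈ Ω) ∧
      Tendsto xk atTop (𝓝 x) ∧ Tendsto vk atTop (𝓝 v) ∧
      ∀ k, vk k ∈ frechetNormalCone Ω (xk k) }

end NormalCones

section Derivatives

variable {E F : Type*} [NormedAddCommGroup E] [NormedSpace ℝ E]
  [NormedAddCommGroup F] [NormedSpace ℝ F]

/-- Graphical derivative. -/
def gDeriv (Fm : E → Set F) (x : E) (y : F) : E → Set F := fun u =>
  {v | (u, v) ∈ contingentCone (svGraph Fm) (x, y)}

/-- Strict graphical derivative. -/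
def sgDeriv (Fm : E → Set F) (x : E) (y : F) : E → Set F := fun u =>
  {v | (u, v) ∈ paratingentCone (svGraph Fm) (x, y)}

end Derivatives

section Coderivative

variable {E F : Type*} [NormedAddCommGroup E] [InnerProductSpace ℝ E]
  [NormedAddCommGroup F] [InnerProductSpace ℝ F]

/-- Coderivative: `w ∈ D*F(x|y)(z)` iff `(w, -z)` is in the limiting normal cone
to the graph of `F` (viewed inside the `ℓ²` product) at `(x, y)`. -/
def coDeriv (Fm : E → Set F) (x : E) (y : F) : F → Set E := fun z =>
  { w | (WithLp.equiv 2 (E × F)).symm (w, -z) ∈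
      limitingNormalCone ((WithLp.equiv 2 (E × F)).symm '' svGraph Fm)
        ((WithLp.equiv 2 (E × F)).symm (x, y)) }

end Coderivative

section Norms

variable {E F : Type*} [NormedAddCommGroup E] [NormedAddCommGroup F]

/-- Outer norm of a (positively homogeneous) set-valued map. -/
def outerNormSV (H : E → Set F) : ℝ≥0∞ :=
  ⨆ (x : E) (_ : ‖x‖ ≤ 1) (y : F) (_ : y ∈ H x), (‖y‖₊ : ℝ≥0∞)

/-- Inner norm of a (positively homogeneous) set-valued map. -/
def innerNormSV (H : E → Set F) : ℝ≥0∞ :=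
  ⨆ (x : E) (_ : ‖x‖ ≤ 1), ⨅ (y : F) (_ : y ∈ H x), (‖y‖₊ : ℝ≥0∞)

/-- Positive homogeneity of a set-valued map. -/
def PosHomogeneous {E F : Type*} [NormedAddCommGroup E] [NormedSpace ℝ E]
    [NormedAddCommGroup F] [NormedSpace ℝ F] (H : E → Set F) : Prop :=
  (0 : F) ∈ H 0 ∧ ∀ (c : ℝ), 0 < c → ∀ x, H (c • x) = c • (H x)

end Norms

section Stability

variable {E F : Type*} [NormedAddCommGroup E] [NormedAddCommGroup F]

/-- Metric regularity with constant `κ`. -/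
def MetrRegWith (κ : ℝ≥0) (Fm : E → Set F) (xbar : E) (ybar : F) : Prop :=
  ∃ U ∈ 𝓝 xbar, ∃ V ∈ 𝓝 ybar, ∀ x ∈ U, ∀ y ∈ V,
    EMetric.infEdist x (svInv Fm y) ≤ (κ : ℝ≥0∞) * EMetric.infEdist y (Fm x)

/-- The regularity modulus `reg (F; xbar|ybar)`. -/
def regMod (Fm : E → Set F) (xbar : E) (ybar : F) : ℝ≥0∞ :=
  ⨅ (κ : ℝ≥0) (_ : MetrRegWith κ Fm xbar ybar), (κ : ℝ≥0∞)

/-- Aubin property with constant `κ`. -/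
def AubinWith (κ : ℝ≥0) (S : F → Set E) (ybar : F) (xbar : E) : Prop :=
  ∃ V ∈ 𝓝 ybar, ∃ U ∈ 𝓝 xbar, ∀ y ∈ V, ∀ y' ∈ V, ∀ x ∈ S y' ∩ U,
    ∃ x' ∈ S y, ‖x - x'‖ ≤ (κ : ℝ) * ‖y - y'‖

/-- The Lipschitz modulus `lip (S; ybar|xbar)`. -/
def lipMod (S : F → Set E) (ybar : F) (xbar : E) : ℝ≥0∞ :=
  ⨅ (κ : ℝ≥0) (_ : AubinWith κ S ybar xbar), (κ : ℝ≥0∞)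

/-- Strong metric subregularity with constant `κ`. -/
def SubregWith (κ : ℝ≥0) (Fm : E → Set F) (xbar : E) (ybar : F) : Prop :=
  ∃ U ∈ 𝓝 xbar, ∀ x ∈ U, (‖x - xbar‖₊ : ℝ≥0∞) ≤ (κ : ℝ≥0∞) * EMetric.infEdist ybar (Fm x)

/-- The subregularity modulus `subreg (F; xbar|ybar)`. -/
def subregMod (Fm : E → Set F) (xbar : E) (ybar : F) : ℝ≥0∞ :=
  ⨅ (κ : ℝ≥0) (_ : SubregWith κ Fm xbar ybar), (κ : ℝ≥0∞)

/-- Isolated calmness with constant `κ`. -/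
def CalmWith (κ : ℝ≥0) (S : F → Set E) (ybar : F) (xbar : E) : Prop :=
  ∃ V ∈ 𝓝 ybar, ∃ U ∈ 𝓝 xbar, ∀ y ∈ V, ∀ x ∈ S y ∩ U, ‖x - xbar‖ ≤ (κ : ℝ) * ‖y - ybar‖

/-- The calmness modulus `clm (S; ybar|xbar)`. -/
def clmMod (S : F → Set E) (ybar : F) (xbar : E) : ℝ≥0∞ :=
  ⨅ (κ : ℝ≥0) (_ : CalmWith κ S ybar xbar), (κ : ℝ≥0∞)

/-- Strong metric regularity: metric regularity plus a single-valued localization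
of the inverse. -/
def StrongMetrReg (Fm : E → Set F) (xbar : E) (ybar : F) : Prop :=
  (∃ κ : ℝ≥0, MetrRegWith κ Fm xbar ybar) ∧
  ∃ U ∈ 𝓝 xbar, ∃ V ∈ 𝓝 ybar, ∀ y ∈ V, (svInv Fm y ∩ U).Subsingleton

end Stability

section AubinCriterion

lemma norm_fst_le_and_norm_snd_le {E H : Type*} [NormedAddCommGroup E] [NormedAddCommGroup H]
    (w : WithLp 2 (E × H)) :
    ‖w.fst‖ ≤ ‖w‖ ∧ ‖w.snd‖ ≤ ‖w‖ ∧ ‖w‖ ≤ ‖w.fst‖ + ‖w.snd‖ := by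
  have h := WithLp.prod_norm_sq_eq_of_L2 w
  have h1 := norm_nonneg w.fst
  have h2 := norm_nonneg w.snd
  have h3 := norm_nonneg w
  refine ⟨?_, ?_, ?_⟩ <;> nlinarith

variable {E H : Type*} [NormedAddCommGroup E] [InnerProductSpace ℝ E]
  [NormedAddCommGroup H] [InnerProductSpace ℝ H]

/-- Componentwise description of the Fréchet normals to a subset of a product. -/
def IsFrechetNormalPair (G : Set (E × H)) (x : E) (y : H) (a : E) (b : H) : Prop :=
  ∀ ε : ℝ, 0 < ε → ∃ δ : ℝ, 0 < δ ∧ ∀ x' y', (x', y') ∈ G → ‖x' - x‖ < δ → ‖y' - y‖ < δ →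
    ⟪a, x' - x⟫ + ⟪b, y' - y⟫ ≤ ε * (‖x' - x‖ + ‖y' - y‖)

lemma mem_frechetNormalCone_toLp_iff (G : Set (E × H)) (x : E) (y : H) (a : E) (b : H) :
    WithLp.toLp 2 (a, b) ∈ frechetNormalCone ((WithLp.equiv 2 (E × H)).symm '' G)
      (WithLp.toLp 2 (x, y)) ↔ IsFrechetNormalPair G x y a b := by
  constructor
  · intro h ε hε
    obtain ⟨δ, hδ, hh⟩ := h ε hε
    refine ⟨δ / 2, by positivity, fun x' y' hG hx hy => ?_⟩
    have hn := norm_fst_le_and_norm_snd_le (WithLp.toLp 2 (x', y') - WithLp.toLp 2 (x, y))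
    have h1 := hh (WithLp.toLp 2 (x', y')) ⟨(x', y'), hG, rfl⟩ (by
      refine lt_of_le_of_lt hn.2.2 ?_
      simp
      linarith)
    have h2 := mul_le_mul_of_nonneg_left hn.2.2 hε.le
    simp only [WithLp.prod_inner_apply] at h1
    simp at h1 h2
    linarith
  · intro h ε hε
    obtain ⟨δ, hδ, hh⟩ := h (ε / 2) (by positivity)
    refine ⟨δ, hδ, ?_⟩
    rintro _ ⟨⟨x', y'⟩, hG, rfl⟩ hlt
    have hn := norm_fst_le_and_norm_snd_le (WithLp.toLp 2 (x', y') - WithLp.toLp 2 (x, y))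
    have h1 := hh x' y' hG (lt_of_le_of_lt hn.1 hlt) (lt_of_le_of_lt hn.2.1 hlt)
    have h2 := mul_le_mul_of_nonneg_left (add_le_add hn.1 hn.2.1) hε.le
    simp only [WithLp.prod_inner_apply]
    simp at h1 h2 ⊢
    linarith

lemma mem_limitingNormalCone_toLp_iff (G : Set (E × H)) (x : E) (y : H) (a : E) (b : H) :
    WithLp.toLp 2 (a, b) ∈ limitingNormalCone ((WithLp.equiv 2 (E × H)).symm '' G)
      (WithLp.toLp 2 (x, y)) ↔
    ∃ (xk : ℕ → E) (yk : ℕ → H) (ak : ℕ → E) (bk : ℕ → H), (∀ k, (xk k, yk k) ∈ G) ∧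
      Tendsto xk atTop (𝓝 x) ∧ Tendsto yk atTop (𝓝 y) ∧ Tendsto ak atTop (𝓝 a) ∧
      Tendsto bk atTop (𝓝 b) ∧ ∀ k, IsFrechetNormalPair G (xk k) (yk k) (ak k) (bk k) := by
  have hof : Continuous (WithLp.ofLp : WithLp 2 (E × H) → E × H) :=
    WithLp.prod_continuous_ofLp 2 E H
  have hto : Continuous (WithLp.toLp 2 : E × H → WithLp 2 (E × H)) :=
    WithLp.prod_continuous_toLp 2 E H
  constructor
  · rintro ⟨wk, uk, hw, hwt, hut, hn⟩
    have h1 := (hof.tendsto _).comp hwt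
    have h2 := (hof.tendsto _).comp hut
    refine ⟨fun k => (wk k).fst, fun k => (wk k).snd, fun k => (uk k).fst, fun k => (uk k).snd,
      fun k => ?_, (continuous_fst.tendsto _).comp h1, (continuous_snd.tendsto _).comp h1,
      (continuous_fst.tendsto _).comp h2, (continuous_snd.tendsto _).comp h2, fun k => ?_⟩
    · obtain ⟨q, hq, hqe⟩ := hw k
      change ((wk k).fst, (wk k).snd) ∈ G
      rw [← hqe]
      exact hq
    · exact (mem_frechetNormalCone_toLp_iff G _ _ _ _).1 (hn k)
  · rintro ⟨xk, yk, ak, bk, hG, hx, hy, ha, hb, hn⟩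
    refine ⟨fun k => WithLp.toLp 2 (xk k, yk k), fun k => WithLp.toLp 2 (ak k, bk k),
      fun k => ⟨_, hG k, rfl⟩, (hto.tendsto _).comp (hx.prodMk_nhds hy),
      (hto.tendsto _).comp (ha.prodMk_nhds hb), fun k => ?_⟩
    exact (mem_frechetNormalCone_toLp_iff G _ _ _ _).2 (hn k)

variable [FiniteDimensional ℝ E] [FiniteDimensional ℝ H]

/-- Under the Aubin property, the Fréchet coderivative of `f + B F C` is bounded below. -/
lemma norm_le_of_aubin {f : E → E} {z p ξ : E} (hf : DifferentiableAt ℝ f z)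
    {F : H → Set H} (B : H →L[ℝ] E) (C : E →L[ℝ] H) (Bl : E →L[ℝ] H)
    (hBl : ∀ v, Bl (B v) = v) {κ : ℝ} {V : Set E} (hV : V ∈ 𝓝 p)
    (hS : ∀ q ∈ V, ∃ z', (∃ v ∈ F (C z'), q = f z' + B v) ∧ ‖z - z'‖ ≤ κ * ‖q - p‖)
    {y a : H} (hp : p = f z + B y)
    (hN : IsFrechetNormalPair (svGraph F) (C z) y (-a) (-(B.adjoint ξ))) (hκ : 0 ≤ κ) :
    ‖ξ‖ ≤ κ * ‖(fderiv ℝ f z).adjoint ξ - C.adjoint a‖ := by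
  set A := fderiv ℝ f z with hA
  set η := A.adjoint ξ - C.adjoint a with hη
  set M := ‖Bl‖ * (‖ξ‖ + (‖A‖ + 1) * (κ * ‖ξ‖)) with hM
  have hM0 : 0 ≤ M := by positivity
  set K := ‖C‖ * (κ * ‖ξ‖) + M + ‖ξ‖ * (κ * ‖ξ‖) with hK
  have key : ∀ ε : ℝ, 0 < ε → ε ≤ 1 → ‖ξ‖ ^ 2 ≤ κ * ‖η‖ * ‖ξ‖ + ε * K := by
    intro ε hε hε1
    obtain ⟨δ, hδ, hd⟩ := hN ε hε
    have hlo := (hf.hasFDerivAt.isLittleO).def hε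
    obtain ⟨δ', hδ', hlo⟩ := Metric.eventually_nhds_iff.1 hlo
    have lim : ∀ c : ℝ, Tendsto (fun t : ℝ => t * c) (𝓝[>] 0) (𝓝 0) := fun c =>
      ((continuous_mul_const c).tendsto' 0 0 (by simp)).mono_left nhdsWithin_le_nhds
    have limp : Tendsto (fun t : ℝ => p - t • ξ) (𝓝[>] 0) (𝓝 p) := by
      have : Continuous (fun t : ℝ => p - t • ξ) := by fun_prop
      exact (this.tendsto' 0 p (by simp)).mono_left nhdsWithin_le_nhds
    obtain ⟨t, htV, ht1, ht2, ht3, ht0⟩ := ((limp.eventually hV).and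
      (((lim (κ * ‖ξ‖)).eventually_lt_const hδ').and
      (((lim (‖C‖ * (κ * ‖ξ‖))).eventually_lt_const hδ).and
      (((lim M).eventually_lt_const hδ).and self_mem_nhdsWithin)))).exists
    have ht0 : 0 < t := ht0
    obtain ⟨z', ⟨v, hv, hq⟩, hz'⟩ := hS _ htV
    have hzn : ‖z' - z‖ ≤ t * (κ * ‖ξ‖) := by
      rw [norm_sub_rev]
      refine hz'.trans (le_of_eq ?_)
      rw [sub_sub_cancel_left, norm_neg, norm_smul, Real.norm_of_nonneg ht0.le]
      ring
    have hg := hlo (y := z') (by rw [dist_eq_norm]; exact hzn.trans_lt ht1)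
    set g := f z' - f z - A (z' - z) with hgdef
    have hBv : B (v - y) = -(t • ξ) - A (z' - z) - g := by
      rw [map_sub, hgdef]
      have : B v = p - t • ξ - f z' := by rw [hq]; abel
      rw [this, hp]
      abel
    have hvn : ‖v - y‖ ≤ t * M := by
      rw [← hBl (v - y), hBv]
      refine (Bl.le_opNorm _).trans ?_
      rw [hM, mul_left_comm]
      refine mul_le_mul_of_nonneg_left ?_ (norm_nonneg _)
      have h1 := norm_sub_le (-(t • ξ) - A (z' - z)) g
      have h2 := norm_sub_le (-(t • ξ)) (A (z' - z))
      rw [norm_neg, norm_smul, Real.norm_of_nonneg ht0.le] at h2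
      have h3 := A.le_opNorm (z' - z)
      have h4 := mul_le_mul_of_nonneg_left hzn (norm_nonneg A)
      have h5 := mul_le_mul_of_nonneg_right hε1 (norm_nonneg (z' - z))
      linarith
    have hCn : ‖C z' - C z‖ ≤ t * (‖C‖ * (κ * ‖ξ‖)) := by
      rw [← map_sub]
      refine (C.le_opNorm _).trans ?_
      have := mul_le_mul_of_nonneg_left hzn (norm_nonneg C)
      linarith
    have hmain := hd (C z') v hv (hCn.trans_lt ht2) (hvn.trans_lt ht3)
    have e1 : ⟪-a, C z' - C z⟫ + ⟪-(B.adjoint ξ), v - y⟫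
        = t * ‖ξ‖ ^ 2 + ⟪η, z' - z⟫ + ⟪ξ, g⟫ := by
      rw [inner_neg_left, inner_neg_left, ContinuousLinearMap.adjoint_inner_left, hBv, hη,
        inner_sub_left, ContinuousLinearMap.adjoint_inner_left,
        ContinuousLinearMap.adjoint_inner_left, ← map_sub, inner_sub_right, inner_sub_right,
        inner_neg_right, inner_smul_right, real_inner_self_eq_norm_sq]
      ring
    rw [e1] at hmain
    have h6 : -(‖η‖ * (t * (κ * ‖ξ‖))) ≤ ⟪η, z' - z⟫ := by
      have := abs_le.1 (abs_real_inner_le_norm η (z' - z))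
      have := mul_le_mul_of_nonneg_left hzn (norm_nonneg η)
      linarith
    have h7 : -(‖ξ‖ * (ε * (t * (κ * ‖ξ‖)))) ≤ ⟪ξ, g⟫ := by
      have := abs_le.1 (abs_real_inner_le_norm ξ g)
      have := mul_le_mul_of_nonneg_left
        (hg.trans (mul_le_mul_of_nonneg_left hzn hε.le)) (norm_nonneg ξ)
      linarith
    have h8 := mul_le_mul_of_nonneg_left (add_le_add hCn hvn) hε.le
    refine le_of_mul_le_mul_left ?_ ht0
    rw [hK]
    linarith
  have hlim : ‖ξ‖ ^ 2 ≤ κ * ‖η‖ * ‖ξ‖ := by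
    have hc : Continuous fun ε : ℝ => κ * ‖η‖ * ‖ξ‖ + ε * K := by fun_prop
    have ht : Tendsto (fun ε : ℝ => κ * ‖η‖ * ‖ξ‖ + ε * K) (𝓝[>] 0) (𝓝 (κ * ‖η‖ * ‖ξ‖)) :=
      (hc.tendsto' 0 _ (by simp)).mono_left nhdsWithin_le_nhds
    refine ge_of_tendsto ht ?_
    filter_upwards [Ioc_mem_nhdsGT (zero_lt_one (α := ℝ))] with ε hε
    exact key ε hε.1 hε.2
  rcases (norm_nonneg ξ).eq_or_lt with h0 | h0
  · rw [← h0]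
    positivity
  · nlinarith

/-- Penalized minimization: either `p` is attained near `z'`, or there is an almost singular
Fréchet normal to the graph of `F`. -/
lemma exists_solution_or_normal {f : E → E} (hf : Differentiable ℝ f)
    {F : H → Set H} (hF : IsClosed (svGraph F)) (B : H →L[ℝ] E) (C : E →L[ℝ] H)
    (Cr : H →L[ℝ] E) (hCr : ∀ x, C (Cr x) = x) {z' p : E} {v' : H} (hv' : v' ∈ F (C z'))
    {d ε : ℝ} (hd : 0 < d) (hε : 0 < ε) (hpd : ‖f z' + B v' - p‖ ≤ d) :
    ∃ z v, v ∈ F (C z) ∧ ‖z - z'‖ ≤ d / ε ∧ ‖v - v'‖ ≤ d / ε ∧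
      (p = f z + B v ∨ ∃ ξ α : E, ∃ β : H, ‖ξ‖ = 1 ∧ ‖α‖ ≤ 2 * ε ∧ ‖β‖ ≤ 2 * ε ∧
        C.adjoint (Cr.adjoint ((fderiv ℝ f z).adjoint ξ + α)) = (fderiv ℝ f z).adjoint ξ + α ∧
        IsFrechetNormalPair (svGraph F) (C z) v
          (-(Cr.adjoint ((fderiv ℝ f z).adjoint ξ + α))) (-(B.adjoint ξ + β))) := by
  set c := ε ^ 2 / d with hc
  have hc0 : 0 < c := by positivity
  set Ω : Set (E × H) := {w | (C w.1, w.2) ∈ svGraph F} with hΩ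
  have hΩc : IsClosed Ω := hF.preimage (by fun_prop : Continuous fun w : E × H => (C w.1, w.2))
  set φ : E × H → ℝ := fun w =>
    ‖f w.1 + B w.2 - p‖ + c * (‖w.1 - z'‖ ^ 2 + ‖w.2 - v'‖ ^ 2) with hφ
  have hfc : Continuous f := hf.continuous
  have hφc : Continuous φ := by fun_prop
  have hφ' : φ (z', v') ≤ d := by simpa [hφ] using hpd
  have hbound : ∀ w : E × H, φ w ≤ d → ‖w.1 - z'‖ ≤ d / ε ∧ ‖w.2 - v'‖ ≤ d / ε := by
    intro w hw
    have h0 := norm_nonneg (f w.1 + B w.2 - p)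
    have h1 : c * (‖w.1 - z'‖ ^ 2 + ‖w.2 - v'‖ ^ 2) ≤ d := by
      simp only [hφ] at hw
      linarith
    have h2 : ‖w.1 - z'‖ ^ 2 + ‖w.2 - v'‖ ^ 2 ≤ (d / ε) ^ 2 := by
      have : (d / ε) ^ 2 = d / c := by rw [hc]; field_simp
      rw [this, le_div_iff₀ hc0]
      linarith
    constructor <;> refine abs_le_of_sq_le_sq' ?_ (by positivity) |>.2 <;>
      nlinarith [sq_nonneg ‖w.1 - z'‖, sq_nonneg ‖w.2 - v'‖]
  obtain ⟨⟨z, v⟩, hw, hmin⟩ : ∃ w ∈ Ω, ∀ w' ∈ Ω, φ w ≤ φ w' := by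
    have hK : IsCompact (Ω ∩ (closedBall z' (d / ε) ×ˢ closedBall v' (d / ε))) :=
      ((isCompact_closedBall _ _).prod (isCompact_closedBall _ _)).inter_left hΩc
    have hmem : (z', v') ∈ Ω ∩ (closedBall z' (d / ε) ×ˢ closedBall v' (d / ε)) :=
      ⟨hv', by simp; positivity⟩
    obtain ⟨w, hw, hm⟩ := hK.exists_isMinOn ⟨_, hmem⟩ hφc.continuousOn
    refine ⟨w, hw.1, fun w' hw' => ?_⟩
    rcases le_total (φ w') d with h | h
    · have := hbound w' h
      exact hm ⟨hw', by simpa [dist_eq_norm] using this⟩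
    · exact (hm hmem).trans (hφ'.trans h)
  obtain ⟨hbz, hbv⟩ := hbound (z, v) ((hmin (z', v') hv').trans hφ')
  refine ⟨z, v, hw, hbz, hbv, or_iff_not_imp_left.2 fun hne => ?_⟩
  set g := f z + B v - p with hg
  have hg0 : g ≠ 0 := fun h => hne (sub_eq_zero.1 h).symm
  have hgn : 0 < ‖g‖ := norm_pos_iff.2 hg0
  set A := fderiv ℝ f z with hA
  set ξ := ‖g‖⁻¹ • g with hξ
  set α := (2 * c) • (z - z') with hα
  set β := (2 * c) • (v - v') with hβ
  have hgrad : ∀ r : ℝ, r ≤ d / ε → 2 * c * r ≤ 2 * ε := by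
    intro r hr
    have := mul_le_mul_of_nonneg_left hr hc0.le
    have h2 : c * (d / ε) = ε := by rw [hc]; field_simp
    linarith
  have hαn : ‖α‖ ≤ 2 * ε := by
    rw [hα, norm_smul, Real.norm_of_nonneg (by positivity)]
    exact hgrad _ hbz
  have hβn : ‖β‖ ≤ 2 * ε := by
    rw [hβ, norm_smul, Real.norm_of_nonneg (by positivity)]
    exact hgrad _ hbv
  set u := A.adjoint ξ + α with hu
  obtain ⟨φ', hder, hφ'⟩ : ∃ φ' : E × H →L[ℝ] ℝ, HasFDerivAt φ φ' (z, v) ∧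
      ∀ h k, φ' (h, k) = ⟪u, h⟫ + ⟪B.adjoint ξ + β, k⟫ := by
    have h1 : HasFDerivAt (fun w : E × H => f w.1 + B w.2 - p)
        (A.comp (ContinuousLinearMap.fst ℝ E H) + B.comp (ContinuousLinearMap.snd ℝ E H))
        (z, v) := by
      refine HasFDerivAt.sub_const _ (HasFDerivAt.add ?_ ?_)
      · exact HasFDerivAt.comp (z, v) (hf z).hasFDerivAt hasFDerivAt_fst
      · exact HasFDerivAt.comp (z, v) B.hasFDerivAt hasFDerivAt_snd
    have h2 := (h1.norm_sq).sqrt (by simpa [hg] using hg0)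
    simp only [Real.sqrt_sq (norm_nonneg _)] at h2
    have h3 : HasFDerivAt (fun w : E × H => w.1 - z') (ContinuousLinearMap.fst ℝ E H) (z, v) :=
      hasFDerivAt_fst.sub_const _
    have h4 : HasFDerivAt (fun w : E × H => w.2 - v') (ContinuousLinearMap.snd ℝ E H) (z, v) :=
      hasFDerivAt_snd.sub_const _
    refine ⟨_, h2.add ((h3.norm_sq.add h4.norm_sq).const_mul c), fun h k => ?_⟩
    simp only [add_apply, smul_apply,
      ContinuousLinearMap.comp_apply, innerSL_apply_apply, ContinuousLinearMap.coe_fst',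
      ContinuousLinearMap.coe_snd', smul_eq_mul, hu, hα, hβ, inner_add_left, inner_smul_left,
      ContinuousLinearMap.adjoint_inner_left, hξ, inner_add_right, ← hg]
    simp
    field_simp
    ring
  have hker : ∀ h : E, C h = 0 → ⟪u, h⟫ = 0 := by
    intro h hh
    have hline : HasDerivAt (fun t : ℝ => ((z, v) : E × H) + t • (h, (0 : H))) (h, 0) 0 := by
      simpa using ((hasDerivAt_id (0 : ℝ)).smul_const (h, (0 : H))).const_add ((z, v) : E × H)
    have hder' : HasFDerivAt φ φ' ((fun t : ℝ => ((z, v) : E × H) + t • (h, (0 : H))) 0) := by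
      simpa using hder
    have hcomp := hder'.comp_hasDerivAt (0 : ℝ) hline
    have hlm : IsLocalMin (φ ∘ fun t : ℝ => ((z, v) : E × H) + t • (h, (0 : H))) 0 := by
      refine Eventually.of_forall fun t => ?_
      have := hmin ((z, v) + t • (h, (0 : H))) (by
        simp only [hΩ, mem_ofPred_eq, Prod.fst_add, Prod.snd_add, Prod.smul_fst, Prod.smul_snd,
          map_add, map_smul, hh, smul_zero, add_zero]
        exact hw)
      simpa using this
    have h0 := hlm.hasDerivAt_eq_zero hcomp
    rw [hφ'] at h0
    simpa using h0
  refine ⟨ξ, α, β, ?_, hαn, hβn, ?_, ?_⟩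
  · rw [hξ, norm_smul, norm_inv, norm_norm, inv_mul_cancel₀ hgn.ne']
  · refine ext_inner_right ℝ fun h => ?_
    rw [ContinuousLinearMap.adjoint_inner_left, ContinuousLinearMap.adjoint_inner_left]
    have := hker (h - Cr (C h)) (by rw [map_sub, hCr, sub_self])
    rw [inner_sub_right] at this
    linarith
  · intro η hη
    set N := ‖Cr‖ + 1 with hN
    have hN0 : 0 < N := by positivity
    have hlo := hder.isLittleO.def (show 0 < η / N by positivity)
    obtain ⟨δ, hδ, hlo⟩ := Metric.eventually_nhds_iff.1 hlo
    refine ⟨δ / N, by positivity, fun x y hxy hx hy => ?_⟩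
    have hN1 : 1 ≤ N := by rw [hN]; linarith [norm_nonneg Cr]
    have hn1 : ‖Cr (x - C z)‖ ≤ N * ‖x - C z‖ := by
      refine (Cr.le_opNorm _).trans ?_
      gcongr
      rw [hN]; linarith
    have hn2 : ‖y - v‖ ≤ N * ‖y - v‖ := le_mul_of_one_le_left (norm_nonneg _) hN1
    have hsub : ((z + Cr (x - C z), y) : E × H) - (z, v) = (Cr (x - C z), y - v) := by
      simp
    have hle := hlo (y := (z + Cr (x - C z), y)) (by
      rw [dist_eq_norm, hsub, Prod.norm_mk]
      rw [lt_div_iff₀' hN0] at hx hy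
      exact max_lt (hn1.trans_lt hx) (hn2.trans_lt hy))
    rw [hsub, hφ'] at hle
    have hm := hmin (z + Cr (x - C z), y) (by
      simp only [hΩ, mem_ofPred_eq, map_add, hCr, add_sub_cancel]
      exact hxy)
    have hnorm : ‖((Cr (x - C z), y - v) : E × H)‖ ≤ N * (‖x - C z‖ + ‖y - v‖) := by
      rw [Prod.norm_mk, mul_add]
      refine max_le ?_ ?_ <;> nlinarith [norm_nonneg (x - C z), norm_nonneg (y - v)]
    have h5 := mul_le_mul_of_nonneg_left hnorm (show 0 ≤ η / N by positivity)
    have h6 : η / N * (N * (‖x - C z‖ + ‖y - v‖)) = η * (‖x - C z‖ + ‖y - v‖) := by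
      field_simp
    have h7 := (abs_le.1 ((Real.norm_eq_abs _).symm.le.trans hle)).2
    rw [inner_neg_left, inner_neg_left, ContinuousLinearMap.adjoint_inner_left]
    linarith

lemma adjoint_adjoint_apply_of_leftInverse (T : E →L[ℝ] H) (R : H →L[ℝ] E)
    (hR : ∀ x, T (R x) = x) (w : H) : R.adjoint (T.adjoint w) = w :=
  ext_inner_right ℝ fun h => by
    rw [ContinuousLinearMap.adjoint_inner_left, ContinuousLinearMap.adjoint_inner_left, hR]

lemma tendsto_adjoint_fderiv_apply {f : E → E} (hf : ContDiff ℝ 1 f) {zbar ξ : E}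
    {zk ξk : ℕ → E} (hz : Tendsto zk atTop (𝓝 zbar)) (hξ : Tendsto ξk atTop (𝓝 ξ)) :
    Tendsto (fun k => (fderiv ℝ f (zk k)).adjoint (ξk k)) atTop
      (𝓝 ((fderiv ℝ f zbar).adjoint ξ)) := by
  have h1 : Continuous fun z => (fderiv ℝ f z).adjoint :=
    ContinuousLinearMap.adjoint.continuous.comp (hf.continuous_fderiv one_ne_zero)
  have h2 : ∀ (Tk : ℕ → E →L[ℝ] E) (T : E →L[ℝ] E), Tendsto Tk atTop (𝓝 T) →
      Tendsto (fun k => Tk k (ξk k)) atTop (𝓝 (T ξ)) := fun Tk T hT =>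
    (isBoundedBilinearMap_apply.continuous.tendsto (T, ξ)).comp (hT.prodMk_nhds hξ)
  exact h2 _ _ ((h1.tendsto zbar).comp hz)

/-- Under the Aubin property, the limiting coderivative of `f + B F C` has trivial kernel. -/
lemma eq_zero_of_aubin {f : E → E} (hf : ContDiff ℝ 1 f)
    {F : H → Set H} (B : H →L[ℝ] E) (C : E →L[ℝ] H)
    (Bl : E →L[ℝ] H) (hBl : ∀ v, Bl (B v) = v) (Cr : H →L[ℝ] E) (hCr : ∀ x, C (Cr x) = x)
    {zbar pbar : E} {vbar : H} (hp : pbar = f zbar + B vbar) {κ : ℝ≥0}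
    (hS : AubinWith κ (svInv fun z => {w | ∃ v ∈ F (C z), w = f z + B v}) pbar zbar)
    {ξ : E} {w : H} (hw : C.adjoint w = (fderiv ℝ f zbar).adjoint ξ) {xk yk ak bk : ℕ → H}
    (hG : ∀ k, (xk k, yk k) ∈ svGraph F) (hx : Tendsto xk atTop (𝓝 (C zbar)))
    (hy : Tendsto yk atTop (𝓝 vbar)) (ha : Tendsto ak atTop (𝓝 (-w)))
    (hb : Tendsto bk atTop (𝓝 (-(B.adjoint ξ))))
    (hn : ∀ k, IsFrechetNormalPair (svGraph F) (xk k) (yk k) (ak k) (bk k)) : ξ = 0 := by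
  obtain ⟨V, hV, U, hU, hS⟩ := hS
  have hfd : Differentiable ℝ f := hf.differentiable one_ne_zero
  set zk : ℕ → E := fun k => zbar + Cr (xk k - C zbar) with hzk
  set ξk : ℕ → E := fun k => ξ + Bl.adjoint (-bk k - B.adjoint ξ) with hξk
  have hCz : ∀ k, C (zk k) = xk k := fun k => by
    simp only [hzk, map_add, hCr, add_sub_cancel]
  have hBξ : ∀ k, B.adjoint (ξk k) = -bk k := fun k => by
    simp only [hξk, map_add, adjoint_adjoint_apply_of_leftInverse Bl B hBl, add_sub_cancel]
  have hzlim : Tendsto zk atTop (𝓝 zbar) := by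
    have hc : Continuous fun x => zbar + Cr (x - C zbar) := by fun_prop
    exact (hc.tendsto' (C zbar) zbar (by simp)).comp hx
  have hξlim : Tendsto ξk atTop (𝓝 ξ) := by
    have hc : Continuous fun b => ξ + Bl.adjoint (-b - B.adjoint ξ) := by fun_prop
    exact (hc.tendsto' (-(B.adjoint ξ)) ξ (by simp)).comp hb
  have hplim : Tendsto (fun k => f (zk k) + B (yk k)) atTop (𝓝 pbar) := by
    rw [hp]
    exact ((hfd.continuous.tendsto _).comp hzlim).add ((B.continuous.tendsto _).comp hy)
  have hηlim : Tendsto (fun k => κ * ‖(fderiv ℝ f (zk k)).adjoint (ξk k) - C.adjoint (-ak k)‖)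
      atTop (𝓝 0) := by
    have h1 := (tendsto_adjoint_fderiv_apply hf hzlim hξlim).sub
      ((C.adjoint.continuous.tendsto _).comp ha.neg)
    have h2 := h1.norm.const_mul (κ : ℝ)
    rw [neg_neg, hw, sub_self, norm_zero, mul_zero] at h2
    exact h2
  have hle : ∀ᶠ k in atTop,
      ‖ξk k‖ ≤ κ * ‖(fderiv ℝ f (zk k)).adjoint (ξk k) - C.adjoint (-ak k)‖ := by
    filter_upwards [hplim.eventually (eventually_mem_nhds_iff.2 hV), hzlim.eventually hU]
      with k hk hkU
    refine norm_le_of_aubin (F := F) (y := yk k) (hfd _) B C Bl hBl hk (fun q hq => ?_) rfl ?_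
      κ.coe_nonneg
    · exact hS q hq _ (mem_of_mem_nhds hk) (zk k) ⟨⟨yk k, by rw [hCz]; exact hG k, rfl⟩, hkU⟩
    · rw [hCz, hBξ, neg_neg, neg_neg]
      exact hn k
  exact norm_le_zero_iff.1 (le_of_tendsto_of_tendsto hξlim.norm hηlim hle)

/-- If the Aubin property fails, the limiting coderivative of `f + B F C` has a nonzero kernel. -/
lemma exists_ne_zero_of_not_aubin {f : E → E} (hf : ContDiff ℝ 1 f)
    {F : H → Set H} (hF : IsClosed (svGraph F)) (B : H →L[ℝ] E) (C : E →L[ℝ] H)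
    (Bl : E →L[ℝ] H) (hBl : ∀ v, Bl (B v) = v) (Cr : H →L[ℝ] E) (hCr : ∀ x, C (Cr x) = x)
    {zbar pbar : E} {vbar : H} (hp : pbar = f zbar + B vbar)
    (hS : ¬ ∃ κ : ℝ≥0, AubinWith κ (svInv fun z => {w | ∃ v ∈ F (C z), w = f z + B v})
      pbar zbar) :
    ∃ ξ : E, ξ ≠ 0 ∧ (∃ w, C.adjoint w = (fderiv ℝ f zbar).adjoint ξ) ∧
      ∃ xk yk ak bk : ℕ → H, (∀ k, (xk k, yk k) ∈ svGraph F) ∧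
        Tendsto xk atTop (𝓝 (C zbar)) ∧ Tendsto yk atTop (𝓝 vbar) ∧
        Tendsto ak atTop (𝓝 (-(Cr.adjoint ((fderiv ℝ f zbar).adjoint ξ)))) ∧
        Tendsto bk atTop (𝓝 (-(B.adjoint ξ))) ∧
        ∀ k, IsFrechetNormalPair (svGraph F) (xk k) (yk k) (ak k) (bk k) := by
  have hfd : Differentiable ℝ f := hf.differentiable one_ne_zero
  have hstep : ∀ k : ℕ, ∃ z' z ξ α : E, ∃ v' v β : H, v ∈ F (C z) ∧
      ‖z' - zbar‖ ≤ 1 / ((k : ℝ) + 1) ∧ ‖f z' + B v' - pbar‖ ≤ 1 / ((k : ℝ) + 1) ∧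
      ‖z - z'‖ ≤ 2 * (1 / ((k : ℝ) + 1)) ∧ ‖v - v'‖ ≤ 2 * (1 / ((k : ℝ) + 1)) ∧
      ‖ξ‖ = 1 ∧ ‖α‖ ≤ 2 * (1 / ((k : ℝ) + 1)) ∧ ‖β‖ ≤ 2 * (1 / ((k : ℝ) + 1)) ∧
      C.adjoint (Cr.adjoint ((fderiv ℝ f z).adjoint ξ + α)) = (fderiv ℝ f z).adjoint ξ + α ∧
      IsFrechetNormalPair (svGraph F) (C z) v
        (-(Cr.adjoint ((fderiv ℝ f z).adjoint ξ + α))) (-(B.adjoint ξ + β)) := by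
    intro k
    set u : ℝ := 1 / ((k : ℝ) + 1) with hu
    have hu0 : 0 < u := by positivity
    have hu1 : u ≤ 1 := by
      rw [hu, div_le_one (by positivity)]
      linarith [(k.cast_nonneg : (0 : ℝ) ≤ k)]
    have huu : u ^ 2 ≤ u := by nlinarith
    by_contra hcon
    refine hS ⟨⟨u⁻¹, by positivity⟩, ball pbar (u ^ 2), ball_mem_nhds _ (by positivity),
      ball zbar (u ^ 2), ball_mem_nhds _ (by positivity), ?_⟩
    rintro p hpV p' hpV' z' ⟨⟨v', hv', rfl⟩, hzU⟩
    rw [mem_ball, dist_eq_norm] at hpV hpV' hzU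
    by_cases hpp : p = f z' + B v'
    · exact ⟨z', ⟨v', hv', hpp⟩, by simp [hpp]⟩
    have hd : 0 < ‖p - (f z' + B v')‖ := norm_pos_iff.2 (sub_ne_zero.2 hpp)
    have hd2 : ‖p - (f z' + B v')‖ ≤ 2 * u ^ 2 := by
      have := norm_sub_le (p - pbar) (f z' + B v' - pbar)
      rw [sub_sub_sub_cancel_right] at this
      linarith
    have hdu : ‖p - (f z' + B v')‖ / u ≤ 2 * u := by
      rw [div_le_iff₀ hu0]
      linarith
    obtain ⟨z, v, hv, hz, hvv, h | ⟨ξ, α, β, hξ, hα, hβ, he, hn⟩⟩ :=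
      exists_solution_or_normal hfd hF B C Cr hCr hv' hd hu0 (norm_sub_rev _ _).le
    · refine ⟨z, ⟨v, hv, h⟩, ?_⟩
      rw [norm_sub_rev]
      refine hz.trans (le_of_eq ?_)
      rw [div_eq_inv_mul]
      rfl
    · exact absurd ⟨z', z, ξ, α, v', v, β, hv, hzU.le.trans huu, hpV'.le.trans huu,
        hz.trans hdu, hvv.trans hdu, hξ, hα, hβ, he, hn⟩ hcon
  choose z' z ξ α v' v β hv hz' hp' hz hvv hξ hα hβ he hn using hstep
  have hu : Tendsto (fun k : ℕ => 1 / ((k : ℝ) + 1)) atTop (𝓝 0) :=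
    tendsto_one_div_add_atTop_nhds_zero_nat
  have hu2 : Tendsto (fun k : ℕ => 2 * (1 / ((k : ℝ) + 1))) atTop (𝓝 0) := by
    simpa using hu.const_mul 2
  have hz'lim : Tendsto z' atTop (𝓝 zbar) :=
    tendsto_iff_norm_sub_tendsto_zero.2 (squeeze_zero (fun _ => norm_nonneg _) hz' hu)
  have hp'lim : Tendsto (fun k => f (z' k) + B (v' k)) atTop (𝓝 pbar) :=
    tendsto_iff_norm_sub_tendsto_zero.2 (squeeze_zero (fun _ => norm_nonneg _) hp' hu)
  have hzlim : Tendsto z atTop (𝓝 zbar) := by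
    simpa using (squeeze_zero_norm hz hu2).add hz'lim
  have hv'lim : Tendsto v' atTop (𝓝 vbar) := by
    have h := (Bl.continuous.tendsto _).comp
      (hp'lim.sub ((hfd.continuous.tendsto _).comp hz'lim))
    rw [hp, add_sub_cancel_left, hBl] at h
    refine h.congr fun k => ?_
    simp [hBl]
  have hvlim : Tendsto v atTop (𝓝 vbar) := by
    simpa using (squeeze_zero_norm hvv hu2).add hv'lim
  have hαlim : Tendsto α atTop (𝓝 0) := squeeze_zero_norm hα hu2
  have hβlim : Tendsto β atTop (𝓝 0) := squeeze_zero_norm hβ hu2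
  obtain ⟨ζ, hζ, s, hs, hξlim⟩ := (isCompact_sphere (0 : E) 1).tendsto_subseq
    (x := ξ) (fun k => by simp [hξ k])
  have hst := hs.tendsto_atTop
  have hulim : Tendsto (fun k => (fderiv ℝ f (z (s k))).adjoint (ξ (s k)) + α (s k)) atTop
      (𝓝 ((fderiv ℝ f zbar).adjoint ζ)) := by
    simpa using (tendsto_adjoint_fderiv_apply hf (hzlim.comp hst) hξlim).add (hαlim.comp hst)
  have hCrlim := (Cr.adjoint.continuous.tendsto _).comp hulim
  refine ⟨ζ, ?_, ⟨Cr.adjoint ((fderiv ℝ f zbar).adjoint ζ), ?_⟩, fun k => C (z (s k)),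
    fun k => v (s k), _, _, fun k => hv _, (C.continuous.tendsto _).comp (hzlim.comp hst),
    hvlim.comp hst, hCrlim.neg, ?_, fun k => hn (s k)⟩
  · rintro rfl
    simp at hζ
  · refine tendsto_nhds_unique ((C.adjoint.continuous.tendsto _).comp hCrlim) ?_
    exact hulim.congr fun k => (he (s k)).symm
  · have h := (((B.adjoint.continuous.tendsto _).comp hξlim).add (hβlim.comp hst)).neg
    rwa [add_zero] at h

end AubinCriterion

lemma Matrix.inv_transpose_mul_self_mul_cancel {n m : ℕ} (B : Matrix (Fin n) (Fin m) ℝ)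
    (hB : Function.Injective (Matrix.toEuclideanLin B)) :
    (B.transpose * B)⁻¹ * (B.transpose * B) = 1 := by
  refine Matrix.nonsing_inv_mul _ ((Matrix.isUnit_iff_isUnit_det _).1 ?_)
  rw [← Matrix.mulVec_injective_iff_isUnit]
  refine (injective_iff_map_eq_zero (Matrix.mulVecLin (B.transpose * B))).2 fun x hx => ?_
  have hker : x ∈ LinearMap.ker (B.transpose * B).mulVecLin := hx
  rw [Matrix.ker_mulVecLin_transpose_mul_self] at hker
  have h0 : Matrix.toEuclideanLin B (WithLp.toLp 2 x) = Matrix.toEuclideanLin B 0 := by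
    rw [map_zero]
    exact congrArg (WithLp.toLp 2) hker
  exact congrArg WithLp.ofLp (hB h0)

lemma Matrix.toEuclideanLin_transpose_eq_adjoint {n m : ℕ} (B : Matrix (Fin n) (Fin m) ℝ) :
    Matrix.toEuclideanLin B.transpose = (Matrix.toEuclideanLin B).adjoint := by
  rw [← Matrix.toEuclideanLin_conjTranspose_eq_adjoint,
    Matrix.conjTranspose_eq_transpose_of_trivial]

lemma Matrix.toEuclideanLin_transpose_injective {n m : ℕ} (C : Matrix (Fin m) (Fin n) ℝ)
    (hC : Function.Surjective (Matrix.toEuclideanLin C)) :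
    Function.Injective (Matrix.toEuclideanLin C.transpose) := by
  rw [Matrix.toEuclideanLin_transpose_eq_adjoint]
  refine (injective_iff_map_eq_zero _).2 fun x hx => ?_
  obtain ⟨y, rfl⟩ := hC x
  rw [← inner_self_eq_zero (𝕜 := ℝ), ← LinearMap.adjoint_inner_left, hx, inner_zero_left]

/-- Aubin property criterion for the solution mapping of `f(z) + B F(Cz) ∋ p`
when `C` is surjective, in terms of the limiting normal cone to the graph of `F`. -/
theorem aubin_criterion_for_GE_surjective_C {n m : ℕ}
    (f : EuclideanSpace ℝ (Fin n) → EuclideanSpace ℝ (Fin n)) (hf : ContDiff ℝ 1 f)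
    (Fm : EuclideanSpace ℝ (Fin m) → Set (EuclideanSpace ℝ (Fin m)))
    (hFm : IsClosed (svGraph Fm))
    (B : Matrix (Fin n) (Fin m) ℝ) (hB : Function.Injective (Matrix.toEuclideanLin B))
    (C : Matrix (Fin m) (Fin n) ℝ) (hC : Function.Surjective (Matrix.toEuclideanLin C))
    (Phi : EuclideanSpace ℝ (Fin n) → Set (EuclideanSpace ℝ (Fin n)))
    (hPhi : Phi = fun z =>
      {w | ∃ v ∈ Fm (Matrix.toEuclideanLin C z), w = f z + Matrix.toEuclideanLin B v})
    (zbar pbar : EuclideanSpace ℝ (Fin n)) (hzp : pbar ∈ Phi zbar)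
    (vbar : EuclideanSpace ℝ (Fin m))
    (hvbar : vbar = Matrix.toEuclideanLin ((B.transpose * B)⁻¹ * B.transpose) (pbar - f zbar)) :
    (∃ κ : ℝ≥0, AubinWith κ (svInv Phi) pbar zbar) ↔
      ∀ ξ : EuclideanSpace ℝ (Fin n),
        ((WithLp.equiv 2 (EuclideanSpace ℝ (Fin m) × EuclideanSpace ℝ (Fin m))).symm
            (Matrix.toEuclideanLin ((C * C.transpose)⁻¹ * C)
              (ContinuousLinearMap.adjoint (fderiv ℝ f zbar) ξ),
             Matrix.toEuclideanLin B.transpose ξ) ∈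
          -limitingNormalCone
            ((WithLp.equiv 2 (EuclideanSpace ℝ (Fin m) × EuclideanSpace ℝ (Fin m))).symm ''
              svGraph Fm)
            ((WithLp.equiv 2 (EuclideanSpace ℝ (Fin m) × EuclideanSpace ℝ (Fin m))).symm
              (Matrix.toEuclideanLin C zbar, vbar)) ∧
          ContinuousLinearMap.adjoint (fderiv ℝ f zbar) ξ ∈
            Set.range (fun w => Matrix.toEuclideanLin C.transpose w)) → ξ = 0 := by
  set Bc := (Matrix.toEuclideanLin B).toContinuousLinearMap
  set Cc := (Matrix.toEuclideanLin C).toContinuousLinearMap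
  set Bl := (Matrix.toEuclideanLin ((B.transpose * B)⁻¹ * B.transpose)).toContinuousLinearMap
  set Cr := (Matrix.toEuclideanLin (C.transpose * (C * C.transpose)⁻¹)).toContinuousLinearMap
  have hBl : ∀ v, Bl (Bc v) = v := fun v => by
    change Matrix.toEuclideanLin ((B.transpose * B)⁻¹ * B.transpose) (Matrix.toEuclideanLin B v) = v
    rw [← LinearMap.comp_apply, ← Matrix.toLpLin_mul, Matrix.mul_assoc,
      Matrix.inv_transpose_mul_self_mul_cancel B hB, Matrix.toLpLin_one, LinearMap.id_apply]
  have hCinv : C * C.transpose * (C * C.transpose)⁻¹ = 1 := by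
    have := Matrix.inv_transpose_mul_self_mul_cancel C.transpose
      (Matrix.toEuclideanLin_transpose_injective C hC)
    rw [Matrix.transpose_transpose] at this
    exact mul_eq_one_comm.1 this
  have hCr : ∀ x, Cc (Cr x) = x := fun x => by
    change Matrix.toEuclideanLin C (Matrix.toEuclideanLin (C.transpose * (C * C.transpose)⁻¹) x) = x
    rw [← LinearMap.comp_apply, ← Matrix.toLpLin_mul, ← Matrix.mul_assoc, hCinv,
      Matrix.toLpLin_one, LinearMap.id_apply]
  have hBadj : ∀ ξ, Bc.adjoint ξ = Matrix.toEuclideanLin B.transpose ξ := fun ξ => by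
    rw [Matrix.toEuclideanLin_transpose_eq_adjoint]
    rfl
  have hCadj : ∀ ξ, Cc.adjoint ξ = Matrix.toEuclideanLin C.transpose ξ := fun ξ => by
    rw [Matrix.toEuclideanLin_transpose_eq_adjoint]
    rfl
  have hCradj : ∀ w, Cr.adjoint w = Matrix.toEuclideanLin ((C * C.transpose)⁻¹ * C) w := fun w => by
    have : (C * C.transpose)⁻¹ * C = (C.transpose * (C * C.transpose)⁻¹).transpose := by
      simp [Matrix.transpose_mul, Matrix.transpose_nonsing_inv]
    rw [this, Matrix.toEuclideanLin_transpose_eq_adjoint]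
    rfl
  have hp : pbar = f zbar + Bc vbar := by
    rw [hPhi] at hzp
    obtain ⟨v, -, hpv⟩ := hzp
    have : vbar = v := by
      rw [hvbar, hpv, add_sub_cancel_left]
      exact hBl v
    rw [this]
    exact hpv
  subst hPhi
  have hneg : ∀ a b : EuclideanSpace ℝ (Fin m),
      -((WithLp.equiv 2 (EuclideanSpace ℝ (Fin m) × EuclideanSpace ℝ (Fin m))).symm (a, b)) =
        WithLp.toLp 2 (-a, -b) := fun _ _ => rfl
  constructor
  · rintro ⟨κ, hS⟩ ξ ⟨hN, w, hw⟩
    rw [Set.mem_neg, hneg] at hN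
    obtain ⟨xk, yk, ak, bk, hG, hx, hy, ha, hb, hn⟩ :=
      (mem_limitingNormalCone_toLp_iff _ _ _ _ _).1 hN
    have hw' : Cc.adjoint w = (fderiv ℝ f zbar).adjoint ξ := (hCadj w).trans hw
    rw [← hCradj, ← hw', adjoint_adjoint_apply_of_leftInverse Cc Cr hCr] at ha
    rw [← hBadj] at hb
    exact eq_zero_of_aubin hf Bc Cc Bl hBl Cr hCr hp hS hw' hG hx hy ha hb hn
  · intro himp
    by_contra hcon
    obtain ⟨ξ, hξ, ⟨w, hw⟩, hN⟩ :=
      exists_ne_zero_of_not_aubin hf hFm Bc Cc Bl hBl Cr hCr hp hcon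
    refine hξ (himp ξ ⟨?_, w, (hCadj w).symm.trans hw⟩)
    rw [Set.mem_neg, hneg, ← hCradj, ← hBadj]
    exact (mem_limitingNormalCone_toLp_iff _ _ _ _ _).2 hN

end
end

section
/- Let f : ℝⁿ → ℝⁿ be continuously differentiable and let F : ℝⁿ ⇉ ℝⁿ be given coordinatewise, F(x) = F₁(x₁) × ⋯ × F_n(x_n) for set-valued maps F_j : ℝ ⇉ ℝ with closed graphs. Define Φ(z) = f(z) + F(z) and the solution mapping S(p) = { z : p ∈ Φ(z) }. Let (z̄, p̄) ∈ gph Φ and set v̄ = p̄ − f(z̄). Assume that ∇f(z̄)ᵀ is a P-matrix and that for each j ∈ {1, …, n} the limiting normal cone satisfies N((z̄_j, v̄_j); gph F_j) ⊆ { (a,b) ∈ ℝ² : a·b ≤ 0 }. Then S has the Aubin property at p̄ for z̄. -/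
open Filter Topology Set Metric RealInnerProductSpace
open scoped ENNReal NNReal Pointwise

noncomputable section

/-- A matrix is a P-matrix if all its principal minors are positive. -/
def IsPMatrix {n : ℕ} (A : Matrix (Fin n) (Fin n) ℝ) : Prop :=
  ∀ s : Finset (Fin n), s.Nonempty →
    0 < (A.submatrix (fun i : {i // i ∈ s} => (i : Fin n))
          (fun i : {i // i ∈ s} => (i : Fin n))).det

/-- Expansion of the determinant of a diagonal perturbation in principal minors. -/
theorem Matrix.det_add_diagonal {ι R : Type*} [Fintype ι] [DecidableEq ι] [CommRing R]
    (B : Matrix ι ι R) (d : ι → R) :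
    (B + Matrix.diagonal d).det = ∑ s : Finset ι,
      (B.submatrix (fun i : {i // i ∈ s} => (i : ι)) (fun i : {i // i ∈ s} => (i : ι))).det *
        ∏ i ∈ sᶜ, d i := by
  refine ((Matrix.detRowAlternating (R := R) (n := ι)).map_add_univ B (Matrix.diagonal d)).trans
    (Finset.sum_congr rfl fun s _ => ?_)
  let M : Matrix ι ι R := Matrix.of fun i j => if i ∈ s then B i j else Matrix.diagonal d i j
  have hM : s.piecewise B (Matrix.diagonal d) = M := by
    ext i j
    by_cases hi : i ∈ s <;> simp [M, Finset.piecewise, hi]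
  have hin : M.toSquareBlockProp (· ∈ s) =
      B.submatrix (fun i : {i // i ∈ s} => (i : ι)) (fun i : {i // i ∈ s} => (i : ι)) := by
    ext i j
    simp [Matrix.toSquareBlockProp, M, i.2]
  have hout : M.toSquareBlockProp (fun i => ¬ i ∈ s) =
      Matrix.diagonal fun i : {i // ¬ i ∈ s} => d i := by
    ext i j
    simp [Matrix.toSquareBlockProp, M, i.2, Matrix.diagonal_apply, Subtype.ext_iff]
  have hprod : ∏ i : {i // ¬ i ∈ s}, d i = ∏ i ∈ sᶜ, d i :=
    (Finset.prod_subtype _ (by simp) d).symm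
  have hdet := M.twoBlockTriangular_det (· ∈ s) fun i hi j hj => by
    have : i ≠ j := fun h => hi (h ▸ hj)
    simp [M, hi, this]
  rw [hin, hout, Matrix.det_diagonal, hprod] at hdet
  refine (congrArg Matrix.det hM).trans (hdet.trans ?_)
  congr!

/-- A P-matrix reverses the sign of no nonzero vector. -/
theorem IsPMatrix.exists_mul_mulVec_pos {n : ℕ} {A : Matrix (Fin n) (Fin n) ℝ}
    (hA : IsPMatrix A) {x : Fin n → ℝ} (hx : x ≠ 0) : ∃ j, 0 < x j * (A.mulVec x) j := by
  classical
  by_contra! hcon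
  set S : Finset (Fin n) := Finset.univ.filter fun i => x i ≠ 0 with hS
  have memS : ∀ i, i ∈ S ↔ x i ≠ 0 := by simp [hS]
  have hSne : S.Nonempty := by
    obtain ⟨i, hi⟩ := Function.ne_iff.1 hx
    exact ⟨i, (memS i).2 hi⟩
  let d : Fin n → ℝ := fun i => if i ∈ S then -(A.mulVec x i) / x i else 1
  have hd : ∀ i, 0 ≤ d i := by
    intro i
    by_cases hi : i ∈ S
    · have hxi := (memS i).1 hi
      have : d i = -(x i * A.mulVec x i) / (x i) ^ 2 := by
        simp only [d, if_pos hi]; field_simp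
      rw [this]
      exact div_nonneg (by linarith [hcon i]) (sq_nonneg _)
    · simp [d, hi]
  let B : Matrix (Fin n) (Fin n) ℝ := Matrix.of fun i j => if i ∈ S then A i j else 0
  have hker : (B + Matrix.diagonal d).mulVec x = 0 := by
    funext i
    rw [Matrix.add_mulVec, Pi.add_apply, Matrix.mulVec_diagonal]
    by_cases hi : i ∈ S
    · have hxi := (memS i).1 hi
      have : B.mulVec x i = A.mulVec x i := by simp [Matrix.mulVec, B, hi]
      simp only [this, d, if_pos hi, Pi.zero_apply]
      field_simp
      ring
    · have hxi : x i = 0 := by simpa [memS] using hi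
      simp [Matrix.mulVec, B, hi, hxi]
  have hdet0 : (B + Matrix.diagonal d).det = 0 := Matrix.exists_mulVec_eq_zero_iff.1 ⟨x, hx, hker⟩
  have hsub : ∀ s : Finset (Fin n), s ⊆ S →
      B.submatrix (fun i : {i // i ∈ s} => (i : Fin n)) (fun i : {i // i ∈ s} => (i : Fin n)) =
      A.submatrix (fun i : {i // i ∈ s} => (i : Fin n)) (fun i : {i // i ∈ s} => (i : Fin n)) := by
    intro s hs
    ext i j
    simp [B, hs i.2]
  have hnonneg : ∀ s : Finset (Fin n),
      0 ≤ (B.submatrix (fun i : {i // i ∈ s} => (i : Fin n))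
        (fun i : {i // i ∈ s} => (i : Fin n))).det * ∏ i ∈ sᶜ, d i := by
    intro s
    refine mul_nonneg ?_ (Finset.prod_nonneg fun i _ => hd i)
    by_cases hs : s ⊆ S
    · rw [hsub s hs]
      rcases s.eq_empty_or_nonempty with rfl | hne
      · simp
      · exact (hA s hne).le
    · obtain ⟨i, his, hiS⟩ := Finset.not_subset.1 hs
      exact (Matrix.det_eq_zero_of_row_eq_zero ⟨i, his⟩ fun j => by simp [B, hiS]).ge
  have hpos : 0 < (B.submatrix (fun i : {i // i ∈ S} => (i : Fin n))
        (fun i : {i // i ∈ S} => (i : Fin n))).det * ∏ i ∈ Sᶜ, d i := by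
    rw [hsub S subset_rfl]
    refine mul_pos (hA S hSne) (Finset.prod_pos fun i hi => ?_)
    simp [d, Finset.mem_compl.1 hi]
  have : 0 < (B + Matrix.diagonal d).det := by
    rw [Matrix.det_add_diagonal]
    exact Finset.sum_pos' (fun s _ => hnonneg s) ⟨S, Finset.mem_univ _, hpos⟩
  exact this.ne' hdet0

section ApproximateNormals

variable {X : Type*} [NormedAddCommGroup X] [InnerProductSpace ℝ X]

/-- The vectors `v` with `⟪v, y - x⟫ ≤ ε * ‖y - x‖` for all points `y` of `Ω` near `x`. -/
def approxNormals (ε : ℝ) (Ω : Set X) (x : X) : Set X :=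
  { v | ∃ δ : ℝ, 0 < δ ∧ ∀ y ∈ Ω, ‖y - x‖ < δ → ⟪v, y - x⟫ ≤ ε * ‖y - x‖ }

/-- Proximal normals are Fréchet normals. -/
theorem smul_sub_mem_frechetNormalCone {Ω : Set X} {p w : X} {t : ℝ} (ht : 0 < t)
    (hw : ∀ y ∈ Ω, ‖p - w‖ ≤ ‖p - y‖) : t⁻¹ • (p - w) ∈ frechetNormalCone Ω w := by
  intro ε hε
  refine ⟨2 * t * ε, by positivity, fun y hy hyw => ?_⟩
  have hsq : ‖p - w‖ ^ 2 ≤ ‖p - y‖ ^ 2 := pow_le_pow_left₀ (norm_nonneg _) (hw y hy) 2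
  have hexp : ‖p - y‖ ^ 2 = ‖p - w‖ ^ 2 - 2 * ⟪p - w, y - w⟫ + ‖y - w‖ ^ 2 := by
    rw [← norm_sub_sq_real]; congr 2; abel
  rw [real_inner_smul_left, inv_mul_le_iff₀ ht]
  nlinarith [norm_nonneg (y - w)]

/-- An `ε`-normal to a closed set is close to a Fréchet normal at a nearby point. -/
theorem exists_frechetNormal_near_approxNormal [ProperSpace X] {Ω : Set X} (hΩ : IsClosed Ω)
    {x v : X} (hx : x ∈ Ω) {ε : ℝ} (hv : v ∈ approxNormals ε Ω x) (hε : 0 < ε) :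
    ∃ w ∈ Ω, ∃ v' ∈ frechetNormalCone Ω w, ‖w - x‖ ≤ ε ∧ ‖v' - v‖ ≤ 2 * ε := by
  obtain ⟨δ, hδ, H⟩ := hv
  obtain ⟨t, ht, ht2, htδ⟩ : ∃ t : ℝ, 0 < t ∧ 2 * t ≤ 1 ∧ 2 * t * ‖v‖ < δ := by
    have hpos : 0 < 2 * (‖v‖ + 1) := by positivity
    refine ⟨min (1 / 2) (δ / (2 * (‖v‖ + 1))), by positivity, ?_, ?_⟩
    · linarith [min_le_left (1 / 2 : ℝ) (δ / (2 * (‖v‖ + 1)))]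
    · have h1 := min_le_right (1 / 2 : ℝ) (δ / (2 * (‖v‖ + 1)))
      have h0 : 0 < min (1 / 2 : ℝ) (δ / (2 * (‖v‖ + 1))) := by positivity
      rw [le_div_iff₀ hpos] at h1
      nlinarith
  obtain ⟨w, hwΩ, hw⟩ := hΩ.exists_infDist_eq_dist ⟨x, hx⟩ (x + t • v)
  have hmin : ∀ y ∈ Ω, ‖x + t • v - w‖ ≤ ‖x + t • v - y‖ := fun y hy => by
    rw [← dist_eq_norm, ← dist_eq_norm, ← hw]
    exact Metric.infDist_le_dist_of_mem hy
  have hsq : ‖w - x‖ ^ 2 ≤ 2 * t * ⟪v, w - x⟫ := by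
    have h1 := pow_le_pow_left₀ (norm_nonneg _) (hmin x hx) 2
    have h2 : x + t • v - w = t • v - (w - x) := by abel
    rw [h2, norm_sub_sq_real, real_inner_smul_left, add_sub_cancel_left] at h1
    linarith
  have hle : ∀ c, ⟪v, w - x⟫ ≤ c * ‖w - x‖ → 0 ≤ c → ‖w - x‖ ≤ 2 * t * c := by
    intro c hc hc0
    rcases (norm_nonneg (w - x)).eq_or_lt with h | h
    · rw [← h]; positivity
    · nlinarith
  have hwδ : ‖w - x‖ < δ := (hle ‖v‖ (real_inner_le_norm _ _) (norm_nonneg _)).trans_lt htδ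
  have hwε := hle ε (H w hwΩ hwδ) hε.le
  refine ⟨w, hwΩ, _, smul_sub_mem_frechetNormalCone ht hmin, by nlinarith, ?_⟩
  have h3 : t⁻¹ • (x + t • v - w) - v = t⁻¹ • (x - w) := by
    rw [show x + t • v - w = (x - w) + t • v by abel, smul_add, inv_smul_smul₀ ht.ne',
      add_sub_cancel_right]
  rw [h3, norm_smul, norm_inv, Real.norm_of_nonneg ht.le, inv_mul_le_iff₀ ht, norm_sub_rev]
  linarith

/-- Limits of `ε`-normals with vanishing `ε` are limiting normals. -/
theorem mem_limitingNormalCone_of_approxNormals [ProperSpace X] {Ω : Set X} (hΩ : IsClosed Ω)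
    {x v : X} {xk vk : ℕ → X} {ε : ℕ → ℝ} (hxk : ∀ k, xk k ∈ Ω) (hx : Tendsto xk atTop (𝓝 x))
    (hv : Tendsto vk atTop (𝓝 v)) (hε : ∀ k, 0 < ε k) (hε0 : Tendsto ε atTop (𝓝 0))
    (hvk : ∀ k, vk k ∈ approxNormals (ε k) Ω (xk k)) : v ∈ limitingNormalCone Ω x := by
  choose w hw v' hv' hwx hvv using fun k =>
    exists_frechetNormal_near_approxNormal hΩ (hxk k) (hvk k) (hε k)
  refine ⟨w, v', hw, ?_, ?_, hv'⟩
  · have := squeeze_zero_norm hwx hε0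
    simpa using this.add hx
  · have := squeeze_zero_norm hvv (by simpa using hε0.const_mul 2)
    simpa using this.add hv

end ApproximateNormals

/-- The derivative of the norm of a nonvanishing differentiable map. -/
theorem HasFDerivAt.norm_of_ne_zero {E F : Type*} [NormedAddCommGroup E] [NormedSpace ℝ E]
    [NormedAddCommGroup F] [InnerProductSpace ℝ F] {r : E → F} {r' : E →L[ℝ] F} {x : E}
    (hr : HasFDerivAt r r' x) (hx : r x ≠ 0) :
    HasFDerivAt (fun y => ‖r y‖) ((innerSL ℝ (‖r x‖⁻¹ • r x)).comp r') x := by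
  have hx' : ‖r x‖ ≠ 0 := norm_ne_zero_iff.2 hx
  have h := hr.norm_sq.sqrt (by positivity)
  simp only [Real.sqrt_sq (norm_nonneg _)] at h
  convert h using 1
  ext y
  simp
  field_simp

/-- At a minimizer of the penalized residual over a coordinatewise graph, the unit residual yields
approximate normals to every coordinate graph. -/
theorem exists_approxNormals_of_isMinOn {n : ℕ}
    {f : EuclideanSpace ℝ (Fin n) → EuclideanSpace ℝ (Fin n)} {Fj : Fin n → ℝ → Set ℝ}
    {y z v : EuclideanSpace ℝ (Fin n)} {c : ℝ} (hc : 0 < c) (hf : DifferentiableAt ℝ f z)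
    (hzv : ∀ j, v j ∈ Fj j (z j)) (hne : f z + v - y ≠ 0)
    (hmin : ∀ u : EuclideanSpace ℝ (Fin n) × EuclideanSpace ℝ (Fin n),
      (∀ j, u.2 j ∈ Fj j (u.1 j)) → ‖f z + v - y‖ ≤ ‖f u.1 + u.2 - y‖ + c * ‖u - (z, v)‖) :
    ∃ e : EuclideanSpace ℝ (Fin n), ‖e‖ = 1 ∧ ∀ j,
      WithLp.toLp 2 (-⟪e, fderiv ℝ f z (EuclideanSpace.single j 1)⟫, -e j) ∈
        approxNormals (2 * c) ((WithLp.equiv 2 (ℝ × ℝ)).symm '' svGraph (Fj j))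
          (WithLp.toLp 2 (z j, v j)) := by
  set r : EuclideanSpace ℝ (Fin n) × EuclideanSpace ℝ (Fin n) → EuclideanSpace ℝ (Fin n) :=
    fun u => f u.1 + u.2 - y with hr
  have hrd : HasFDerivAt r ((fderiv ℝ f z).comp (ContinuousLinearMap.fst ℝ _ _) +
      ContinuousLinearMap.snd ℝ _ _) (z, v) :=
    ((hf.hasFDerivAt.comp (z, v) hasFDerivAt_fst).add hasFDerivAt_snd).sub_const y
  have hg := hrd.norm_of_ne_zero hne
  set e : EuclideanSpace ℝ (Fin n) := ‖r (z, v)‖⁻¹ • r (z, v) with he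
  have hnorm : ‖e‖ = 1 := by
    rw [he, norm_smul, norm_inv, norm_norm, inv_mul_cancel₀ (norm_ne_zero_iff.2 hne)]
  refine ⟨e, hnorm, fun j => ?_⟩
  obtain ⟨δ, hδ, hball⟩ := Metric.eventually_nhds_iff.1 (hg.isLittleO.def hc)
  refine ⟨δ, hδ, ?_⟩
  rintro _ ⟨⟨a, b⟩, hab, rfl⟩ hlt
  set s : EuclideanSpace ℝ (Fin n) := EuclideanSpace.single j 1 with hs
  set u : EuclideanSpace ℝ (Fin n) × EuclideanSpace ℝ (Fin n) :=
    (z + (a - z j) • s, v + (b - v j) • s) with hu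
  have hsn : ‖s‖ = 1 := by simp [hs]
  have hudiff : u - (z, v) = ((a - z j) • s, (b - v j) • s) := by simp [hu]
  have hunorm : ‖u - (z, v)‖ ≤
      ‖(WithLp.equiv 2 (ℝ × ℝ)).symm (a, b) - WithLp.toLp 2 (z j, v j)‖ := by
    rw [hudiff, Prod.norm_def, WithLp.prod_norm_eq_of_L2]
    simp only [norm_smul, hsn, mul_one]
    refine max_le (Real.le_sqrt_of_sq_le ?_) (Real.le_sqrt_of_sq_le ?_)
    · exact le_add_of_nonneg_right (sq_nonneg _)
    · exact le_add_of_nonneg_left (sq_nonneg _)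
  have hmem : ∀ i, u.2 i ∈ Fj i (u.1 i) := by
    intro i
    by_cases hij : i = j
    · subst hij
      simpa [hu, hs, svGraph] using hab
    · simpa [hu, hs, hij] using hzv i
  have h1 := hmin u hmem
  have h2 := hball (y := u) (by rw [dist_eq_norm]; exact hunorm.trans_lt hlt)
  rw [Real.norm_eq_abs] at h2
  have h3 := (abs_le.1 h2).2
  have h4 : ((innerSL ℝ e).comp ((fderiv ℝ f z).comp (ContinuousLinearMap.fst ℝ _ _) +
      ContinuousLinearMap.snd ℝ _ _)) (u - (z, v)) =
      (a - z j) * ⟪e, fderiv ℝ f z s⟫ + (b - v j) * e j := by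
    rw [hudiff]
    simp [hs, EuclideanSpace.inner_single_right]
  rw [h4] at h3
  have h5 : ⟪(WithLp.toLp 2 (-⟪e, fderiv ℝ f z s⟫, -e j) : WithLp 2 (ℝ × ℝ)),
      (WithLp.equiv 2 (ℝ × ℝ)).symm (a, b) - WithLp.toLp 2 (z j, v j)⟫ =
      -((a - z j) * ⟪e, fderiv ℝ f z s⟫ + (b - v j) * e j) := by
    simp [WithLp.prod_inner_apply]
    ring
  rw [h5]
  have h6 := mul_le_mul_of_nonneg_left hunorm hc.le
  simp only [hr] at h3
  linarith

/-- Either the perturbed inclusion is solvable nearby with a linear estimate, or approximate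
normals to the coordinate graphs violate the coderivative criterion up to a small error. -/
theorem exists_solution_or_approxNormals {n : ℕ}
    {f : EuclideanSpace ℝ (Fin n) → EuclideanSpace ℝ (Fin n)} (hf : Differentiable ℝ f)
    {Fj : Fin n → ℝ → Set ℝ} (hFj : ∀ j, IsClosed (svGraph (Fj j)))
    {x v : EuclideanSpace ℝ (Fin n)} (hxv : ∀ j, v j ∈ Fj j (x j)) (y : EuclideanSpace ℝ (Fin n))
    {c : ℝ} (hc : 0 < c) :
    ∃ z w : EuclideanSpace ℝ (Fin n), (∀ j, w j ∈ Fj j (z j)) ∧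
      c * ‖z - x‖ ≤ ‖f x + v - y‖ ∧ c * ‖w - v‖ ≤ ‖f x + v - y‖ ∧
      (f z + w = y ∨ ∃ e : EuclideanSpace ℝ (Fin n), ‖e‖ = 1 ∧ ∀ j,
        WithLp.toLp 2 (-⟪e, fderiv ℝ f z (EuclideanSpace.single j 1)⟫, -e j) ∈
          approxNormals (2 * c) ((WithLp.equiv 2 (ℝ × ℝ)).symm '' svGraph (Fj j))
            (WithLp.toLp 2 (z j, w j))) := by
  set G : Set (EuclideanSpace ℝ (Fin n) × EuclideanSpace ℝ (Fin n)) :=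
    {u | ∀ j, u.2 j ∈ Fj j (u.1 j)} with hG
  have hGc : IsClosed G := by
    have : G = ⋂ j, (fun u : EuclideanSpace ℝ (Fin n) × EuclideanSpace ℝ (Fin n) =>
        (u.1 j, u.2 j)) ⁻¹' svGraph (Fj j) := by
      ext u; simp [hG, svGraph]
    rw [this]
    exact isClosed_iInter fun j => (hFj j).preimage (by fun_prop)
  have hfc : Continuous f := hf.continuous
  let φ : EuclideanSpace ℝ (Fin n) × EuclideanSpace ℝ (Fin n) → ℝ :=
    fun u => ‖f u.1 + u.2 - y‖ + c * ‖u - (x, v)‖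
  have hφ : Continuous φ := by fun_prop
  have hcoer : Tendsto φ (cocompact _) atTop := by
    refine tendsto_atTop_mono (f := fun u => c * (‖u‖ - ‖(x, v)‖)) (fun u => ?_) ?_
    · have h := norm_sub_norm_le u (x, v)
      have := norm_nonneg (f u.1 + u.2 - y)
      have := mul_le_mul_of_nonneg_left h hc.le
      simp only [φ]; linarith
    · exact (tendsto_atTop_add_const_right _ _ (tendsto_norm_cocompact_atTop)).const_mul_atTop hc
  obtain ⟨⟨z, w⟩, hzw, hmin⟩ := hφ.continuousOn.exists_isMinOn' hGc (x₀ := (x, v)) hxv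
    ((hcoer.eventually_ge_atTop _).filter_mono inf_le_left)
  have h0 : c * ‖(z, w) - (x, v)‖ ≤ ‖f x + v - y‖ := by
    have h : φ (z, w) ≤ φ (x, v) := hmin hxv
    simp only [φ, sub_self, norm_zero, mul_zero, add_zero] at h
    linarith [norm_nonneg (f z + w - y)]
  refine ⟨z, w, hzw, ?_, ?_, ?_⟩
  · exact (mul_le_mul_of_nonneg_left (norm_fst_le ((z, w) - (x, v))) hc.le).trans h0
  · exact (mul_le_mul_of_nonneg_left (norm_snd_le ((z, w) - (x, v))) hc.le).trans h0
  · by_cases hne : f z + w - y = 0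
    · exact Or.inl (sub_eq_zero.1 hne)
    · refine Or.inr (exists_approxNormals_of_isMinOn hc (hf z) hzw hne fun u hu => ?_)
      have h : φ (z, w) ≤ φ u := hmin hu
      have ht := mul_le_mul_of_nonneg_left (norm_sub_le_norm_sub_add_norm_sub u (z, w) (x, v)) hc.le
      simp only [φ] at h
      linarith

/-- Sufficient condition for the Aubin property of the solution mapping of
`f(z) + F(z) ∋ p` with coordinatewise `F`, a P-matrix Jacobian transpose, and
monotone-type normal cone conditions. -/
theorem aubin_of_PMatrix {n : ℕ}
    (f : EuclideanSpace ℝ (Fin n) → EuclideanSpace ℝ (Fin n)) (hf : ContDiff ℝ 1 f)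
    (Fj : Fin n → ℝ → Set ℝ) (hFj : ∀ j, IsClosed (svGraph (Fj j)))
    (Phi : EuclideanSpace ℝ (Fin n) → Set (EuclideanSpace ℝ (Fin n)))
    (hPhi : Phi = fun z =>
      {w | ∃ v : EuclideanSpace ℝ (Fin n), (∀ j, v j ∈ Fj j (z j)) ∧ w = f z + v})
    (zbar pbar : EuclideanSpace ℝ (Fin n)) (hzp : pbar ∈ Phi zbar)
    (vbar : EuclideanSpace ℝ (Fin n)) (hvbar : vbar = pbar - f zbar)
    (J : Matrix (Fin n) (Fin n) ℝ)
    (hJ : ∀ i j, J i j = fderiv ℝ f zbar (EuclideanSpace.single j (1 : ℝ)) i)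
    (hP : IsPMatrix J.transpose)
    (hN : ∀ j, limitingNormalCone
        ((WithLp.equiv 2 (ℝ × ℝ)).symm '' svGraph (Fj j))
        ((WithLp.equiv 2 (ℝ × ℝ)).symm (zbar j, vbar j)) ⊆
      {q : WithLp 2 (ℝ × ℝ) |
        (WithLp.equiv 2 (ℝ × ℝ) q).1 * (WithLp.equiv 2 (ℝ × ℝ) q).2 ≤ 0}) :
    ∃ κ : ℝ≥0, AubinWith κ (svInv Phi) pbar zbar := by
  by_contra hcon
  simp only [AubinWith, not_exists, not_and] at hcon
  have key : ∀ k : ℕ, ∃ z w e : EuclideanSpace ℝ (Fin n), (∀ j, w j ∈ Fj j (z j)) ∧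
      ‖e‖ = 1 ∧ ‖z - zbar‖ ≤ 3 * (1 / ((k : ℝ) + 1)) ∧
      (∃ x p : EuclideanSpace ℝ (Fin n), ‖x - zbar‖ ≤ 1 / ((k : ℝ) + 1) ∧
        ‖p - pbar‖ ≤ 1 / ((k : ℝ) + 1) ∧ ‖w - (p - f x)‖ ≤ 2 * (1 / ((k : ℝ) + 1))) ∧
      ∀ j, WithLp.toLp 2 (-⟪e, fderiv ℝ f z (EuclideanSpace.single j 1)⟫, -e j) ∈
        approxNormals (2 * (1 / ((k : ℝ) + 1)))
          ((WithLp.equiv 2 (ℝ × ℝ)).symm '' svGraph (Fj j)) (WithLp.toLp 2 (z j, w j)) := by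
    intro k
    have hc : 0 < 1 / ((k : ℝ) + 1) := by positivity
    have hc1 : 1 / ((k : ℝ) + 1) ≤ 1 := by
      rw [div_le_one (by positivity)]; linarith [(Nat.cast_nonneg k : (0 : ℝ) ≤ k)]
    have hck : ((k : ℝ) + 1) * (1 / ((k : ℝ) + 1)) = 1 := by field_simp
    set c : ℝ := 1 / ((k : ℝ) + 1)
    have h := hcon (k + 1) (ball pbar (c * c)) (ball_mem_nhds _ (by positivity))
      (ball zbar c) (ball_mem_nhds _ hc)
    push Not at h
    obtain ⟨y, hy, p, hp, x, ⟨hxp, hx⟩, hfail⟩ := h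
    obtain ⟨v, hv, hpv⟩ : ∃ v : EuclideanSpace ℝ (Fin n), (∀ j, v j ∈ Fj j (x j)) ∧
      p = f x + v := by simpa [svInv, hPhi] using hxp
    rw [mem_ball, dist_eq_norm] at hy hp hx
    have hpy : ‖p - y‖ ≤ c * (2 * c) := by
      have := norm_sub_le_norm_sub_add_norm_sub p pbar y
      rw [norm_sub_rev pbar y] at this
      linarith
    obtain ⟨z, w, hzw, hzx, hwv, hor⟩ :=
      exists_solution_or_approxNormals (hf.differentiable (by norm_num)) hFj hv y hc
    rw [← hpv] at hzx hwv
    have hzx' : ‖z - x‖ ≤ 2 * c := le_of_mul_le_mul_left (hzx.trans hpy) hc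
    have hwv' : ‖w - v‖ ≤ 2 * c := le_of_mul_le_mul_left (hwv.trans hpy) hc
    rcases hor with hsol | ⟨e, he, hnormal⟩
    · exfalso
      have hz : z ∈ svInv Phi y := by
        simp only [svInv, hPhi, mem_ofPred_eq]
        exact ⟨w, hzw, hsol.symm⟩
      have h1 := hfail z hz
      rw [norm_sub_rev x z, norm_sub_rev y p] at h1
      push_cast at h1
      have h2 := mul_le_mul_of_nonneg_left hzx (by positivity : (0 : ℝ) ≤ (k : ℝ) + 1)
      rw [← mul_assoc, hck, one_mul] at h2
      linarith
    · refine ⟨z, w, e, hzw, he, ?_, ⟨x, p, hx.le, by nlinarith, ?_⟩, hnormal⟩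
      · linarith [norm_sub_le_norm_sub_add_norm_sub z x zbar]
      · rwa [hpv, add_sub_cancel_left]
  choose z w e hzw he hz hxp hnormal using key
  choose x p hx hp hw using hxp
  have hc0 : Tendsto (fun k : ℕ => 1 / ((k : ℝ) + 1)) atTop (𝓝 0) :=
    tendsto_one_div_add_atTop_nhds_zero_nat
  have hz0 : Tendsto z atTop (𝓝 zbar) := by
    simpa using (squeeze_zero_norm hz (by simpa using hc0.const_mul 3)).add_const zbar
  have hx0 : Tendsto x atTop (𝓝 zbar) := by
    simpa using (squeeze_zero_norm hx hc0).add_const zbar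
  have hp0 : Tendsto p atTop (𝓝 pbar) := by
    simpa using (squeeze_zero_norm hp hc0).add_const pbar
  have hw0 : Tendsto w atTop (𝓝 vbar) := by
    have h1 : Tendsto (fun k => p k - f (x k)) atTop (𝓝 vbar) :=
      hvbar ▸ hp0.sub ((hf.continuous.tendsto zbar).comp hx0)
    simpa using (squeeze_zero_norm hw (by simpa using hc0.const_mul 2)).add h1
  obtain ⟨e₀, he₀, σ, hσ, hlim⟩ :=
    (isCompact_sphere (0 : EuclideanSpace ℝ (Fin n)) 1).tendsto_subseq
      (fun k => by simpa using he k)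
  have hmono := hσ.tendsto_atTop
  have hsign : ∀ j, e₀ j * (J.transpose.mulVec e₀) j ≤ 0 := by
    intro j
    have hclosed : IsClosed ((WithLp.equiv 2 (ℝ × ℝ)).symm '' svGraph (Fj j)) :=
      (WithLp.homeomorphProd 2 ℝ ℝ).symm.isClosedMap _ (hFj j)
    have hinner : ⟪e₀, fderiv ℝ f zbar (EuclideanSpace.single j 1)⟫ =
        (J.transpose.mulVec e₀) j := by
      simp [Matrix.mulVec, dotProduct, PiLp.inner_apply, hJ]
    have hfd : Tendsto (fun k => fderiv ℝ f (z (σ k)) (EuclideanSpace.single j 1)) atTop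
        (𝓝 (fderiv ℝ f zbar (EuclideanSpace.single j 1))) :=
      (((hf.continuous_fderiv (by norm_num)).clm_apply continuous_const).tendsto zbar).comp
        (hz0.comp hmono)
    have hcoord : ∀ j, Continuous fun u : EuclideanSpace ℝ (Fin n) => u j := fun j => by fun_prop
    have htoLp : Continuous fun q : ℝ × ℝ => (WithLp.toLp 2 q : WithLp 2 (ℝ × ℝ)) :=
      (WithLp.homeomorphProd 2 ℝ ℝ).symm.continuous
    have hmem := mem_limitingNormalCone_of_approxNormals hclosed
      (xk := fun k => WithLp.toLp 2 (z (σ k) j, w (σ k) j))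
      (x := WithLp.toLp 2 (zbar j, vbar j))
      (vk := fun k => WithLp.toLp 2
        (-⟪e (σ k), fderiv ℝ f (z (σ k)) (EuclideanSpace.single j 1)⟫, -e (σ k) j))
      (v := WithLp.toLp 2
        (-⟪e₀, fderiv ℝ f zbar (EuclideanSpace.single j 1)⟫, -e₀ j))
      (ε := fun k => 2 * (1 / ((σ k : ℝ) + 1)))
      (fun k => ⟨(z (σ k) j, w (σ k) j), hzw _ j, rfl⟩)
      ((htoLp.tendsto _).comp ((((hcoord j).tendsto _).comp (hz0.comp hmono)).prodMk_nhds
        (((hcoord j).tendsto _).comp (hw0.comp hmono))))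
      ((htoLp.tendsto _).comp (((hlim.inner hfd).neg).prodMk_nhds
        (((hcoord j).tendsto _).comp hlim).neg))
      (fun k => by positivity)
      (by simpa using (hc0.comp hmono).const_mul 2)
      (fun k => hnormal _ j)
    have h := hN j hmem
    simp only [mem_ofPred_eq, WithLp.equiv_apply, hinner] at h
    linarith
  have hne : (e₀ : Fin n → ℝ) ≠ 0 := by
    intro h0
    have : e₀ = 0 := by ext i; exact congrFun h0 i
    simp [this] at he₀
  obtain ⟨j, hj⟩ := hP.exists_mul_mulVec_pos hne
  exact absurd (hsign j) (not_le.2 hj)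

end
end
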